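/- Suppose dim V = 2n+1 with n ≥ 1 and the contact metric algebraic relations h∘φ = −φ∘h and tr(h) = 0 hold. Define the Ricci operator Q : V → V by ⟨QX, Y⟩ = Σₐ R(eₐ, X, Y, eₐ) for any orthonormal basis (eₐ) of V. Then QX = (2nf₁ + 3f₂ − f₃)X − (3f₂ + (2n−1)f₃)η(X)ξ + ((2n−1)f₄ − f₆)hX for all X ∈ V; i.e. Q = (2nf₁ + 3f₂ − f₃)·Id − (3f₂ + (2n−1)f₃)·η⊗ξ + ((2n−1)f₄ − f₆)·h. -/

import Mathlib

open RealInnerProductSpace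

variable {V : Type*} [NormedAddCommGroup V] [InnerProductSpace ℝ V]

/-- R₁(X,Y)Z = ⟨Y,Z⟩X − ⟨X,Z⟩Y -/
noncomputable def R1 (X Y Z : V) : V := ⟪Y, Z⟫ • X - ⟪X, Z⟫ • Y

/-- R₂(X,Y)Z = ⟨X,φZ⟩φY − ⟨Y,φZ⟩φX + 2⟨X,φY⟩φZ -/
noncomputable def R2 (φ : V →ₗ[ℝ] V) (X Y Z : V) : V :=
  ⟪X, φ Z⟫ • φ Y - ⟪Y, φ Z⟫ • φ X + (2 * ⟪X, φ Y⟫) • φ Z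

/-- R₃(X,Y)Z = η(X)η(Z)Y − η(Y)η(Z)X + ⟨X,Z⟩η(Y)ξ − ⟨Y,Z⟩η(X)ξ, where η(X) = ⟨X,ξ⟩ -/
noncomputable def R3 (ξ : V) (X Y Z : V) : V :=
  (⟪X, ξ⟫ * ⟪Z, ξ⟫) • Y - (⟪Y, ξ⟫ * ⟪Z, ξ⟫) • X
    + (⟪X, Z⟫ * ⟪Y, ξ⟫) • ξ - (⟪Y, Z⟫ * ⟪X, ξ⟫) • ξ

/-- R₄(X,Y)Z = ⟨Y,Z⟩hX − ⟨X,Z⟩hY + ⟨hY,Z⟩X − ⟨hX,Z⟩Y -/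
noncomputable def R4 (h : V →ₗ[ℝ] V) (X Y Z : V) : V :=
  ⟪Y, Z⟫ • h X - ⟪X, Z⟫ • h Y + ⟪h Y, Z⟫ • X - ⟪h X, Z⟫ • Y

/-- R₅(X,Y)Z = ⟨hY,Z⟩hX − ⟨hX,Z⟩hY + ⟨φhX,Z⟩φhY − ⟨φhY,Z⟩φhX -/
noncomputable def R5 (φ h : V →ₗ[ℝ] V) (X Y Z : V) : V :=
  ⟪h Y, Z⟫ • h X - ⟪h X, Z⟫ • h Y
    + ⟪φ (h X), Z⟫ • φ (h Y) - ⟪φ (h Y), Z⟫ • φ (h X)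

/-- R₆(X,Y)Z = η(X)η(Z)hY − η(Y)η(Z)hX + ⟨hX,Z⟩η(Y)ξ − ⟨hY,Z⟩η(X)ξ -/
noncomputable def R6 (ξ : V) (h : V →ₗ[ℝ] V) (X Y Z : V) : V :=
  (⟪X, ξ⟫ * ⟪Z, ξ⟫) • h Y - (⟪Y, ξ⟫ * ⟪Z, ξ⟫) • h X
    + (⟪h X, Z⟫ * ⟪Y, ξ⟫) • ξ - (⟪h Y, Z⟫ * ⟪X, ξ⟫) • ξ

/-- R = f₁R₁ + f₂R₂ + f₃R₃ + f₄R₄ + f₅R₅ + f₆R₆ -/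
noncomputable def Rc (φ h : V →ₗ[ℝ] V) (ξ : V) (f₁ f₂ f₃ f₄ f₅ f₆ : ℝ) (X Y Z : V) : V :=
  f₁ • R1 X Y Z + f₂ • R2 φ X Y Z + f₃ • R3 ξ X Y Z + f₄ • R4 h X Y Z
    + f₅ • R5 φ h X Y Z + f₆ • R6 ξ h X Y Z

/-- R(X,Y,Z,W) = ⟨R(X,Y)Z, W⟩ -/
noncomputable def Rq (φ h : V →ₗ[ℝ] V) (ξ : V) (f₁ f₂ f₃ f₄ f₅ f₆ : ℝ) (X Y Z W : V) : ℝ :=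
  ⟪Rc φ h ξ f₁ f₂ f₃ f₄ f₅ f₆ X Y Z, W⟫

/-!
For arbitrary linear maps `φ`, `h` and an arbitrary vector `ξ`, the contraction
`Σₐ ⟨Rᵢ(eₐ, X)Y, eₐ⟩` of each of the six tensors is given by `tr φ`, `tr h`, `tr (φ ∘ h)` and
Parseval's identity. In the contact setting all three traces vanish: `φ` is skew-symmetric,
`h` and `φ` anticommute, and `h = -(h ∘ φ) ∘ φ` where `h ∘ φ` and `φ` anticommute as well.
The contribution of `R₅` cancels because `(φ ∘ h)² = h²`.
-/

theorem trace_mul_eq_zero_of_anticommute {R M : Type*} [CommRing R]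
    [IsAddTorsionFree R] [AddCommGroup M] [Module R M] {f g : Module.End R M}
    (hfg : f * g = -(g * f)) : LinearMap.trace R M (f * g) = 0 := by
  have hneg : LinearMap.trace R M (f * g) = -LinearMap.trace R M (f * g) := by
    conv_lhs => rw [hfg, map_neg, LinearMap.trace_mul_comm]
  exact self_eq_neg.mp hneg

section RicciForm

variable {ι : Type*} [Fintype ι] (b : OrthonormalBasis ι ℝ V)

theorem sum_inner_map_self_eq_trace (f : V →ₗ[ℝ] V) :
    ∑ a, ⟪f (b a), b a⟫ = LinearMap.trace ℝ V f := by
  simp only [LinearMap.trace_eq_sum_inner f b, real_inner_comm]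

theorem sum_inner_map_mul_inner (f : V →ₗ[ℝ] V) (X Y : V) :
    ∑ a, ⟪f (b a), Y⟫ * ⟪X, b a⟫ = ⟪f X, Y⟫ := by
  conv_rhs => rw [← b.sum_repr' X]
  simp only [map_sum, map_smul, sum_inner, real_inner_smul_left, real_inner_comm (b _) X, mul_comm]

theorem sum_inner_self_eq_finrank : ∑ a, ⟪b a, b a⟫ = (Module.finrank ℝ V : ℝ) := by
  simp [Module.finrank_eq_card_basis b.toBasis]

/-- The Ricci form `Ric(X, Y) = Σₐ ⟨T(eₐ, X)Y, eₐ⟩` of a curvature-like tensor `T`: the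
contraction of the first and last arguments of `⟨T(X, Y)Z, W⟩`, computed in the orthonormal
basis `b = (eₐ)`. No multilinearity of `T` is assumed, so the basis is an argument. -/
noncomputable def ricciForm (T : V → V → V → V) (X Y : V) : ℝ :=
  ∑ a, ⟪T (b a) X Y, b a⟫

theorem ricciForm_R1 (X Y : V) :
    ricciForm b R1 X Y = ((Module.finrank ℝ V : ℝ) - 1) * ⟪X, Y⟫ := by
  have hterm (e : V) : ⟪R1 e X Y, e⟫ = ⟪X, Y⟫ * ⟪e, e⟫ - ⟪X, e⟫ * ⟪e, Y⟫ := by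
    simp only [R1, inner_sub_left, real_inner_smul_left]
    ring
  simp only [ricciForm, hterm, Finset.sum_sub_distrib, ← Finset.mul_sum,
    sum_inner_self_eq_finrank, b.sum_inner_mul_inner]
  ring

theorem ricciForm_R2 (φ : V →ₗ[ℝ] V) (X Y : V) :
    ricciForm b (R2 φ) X Y = 3 * ⟪φ X, φ Y⟫ - LinearMap.trace ℝ V φ * ⟪X, φ Y⟫ := by
  have hterm (e : V) :
      ⟪R2 φ e X Y, e⟫ = 3 * (⟪φ X, e⟫ * ⟪e, φ Y⟫) - ⟪X, φ Y⟫ * ⟪φ e, e⟫ := by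
    simp only [R2, inner_add_left, inner_sub_left, real_inner_smul_left,
      real_inner_comm e (φ _)]
    ring
  simp only [ricciForm, hterm, Finset.sum_sub_distrib, ← Finset.mul_sum,
    sum_inner_map_self_eq_trace, b.sum_inner_mul_inner]
  ring

theorem ricciForm_R3 (ξ X Y : V) :
    ricciForm b (R3 ξ) X Y =
      (2 - (Module.finrank ℝ V : ℝ)) * (⟪X, ξ⟫ * ⟪Y, ξ⟫) - ⟪ξ, ξ⟫ * ⟪X, Y⟫ := by
  have hterm (e : V) :
      ⟪R3 ξ e X Y, e⟫ = ⟪Y, ξ⟫ * (⟪X, e⟫ * ⟪e, ξ⟫) - (⟪X, ξ⟫ * ⟪Y, ξ⟫) * ⟪e, e⟫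
        + ⟪X, ξ⟫ * (⟪ξ, e⟫ * ⟪e, Y⟫) - ⟪X, Y⟫ * (⟪ξ, e⟫ * ⟪e, ξ⟫) := by
    simp only [R3, inner_add_left, inner_sub_left, real_inner_smul_left]
    ring
  simp only [ricciForm, hterm, Finset.sum_add_distrib, Finset.sum_sub_distrib,
    ← Finset.mul_sum, sum_inner_self_eq_finrank, b.sum_inner_mul_inner, real_inner_comm Y ξ]
  ring

theorem ricciForm_R4 (h : V →ₗ[ℝ] V) (X Y : V) :
    ricciForm b (R4 h) X Y =
      LinearMap.trace ℝ V h * ⟪X, Y⟫ + ((Module.finrank ℝ V : ℝ) - 2) * ⟪h X, Y⟫ := by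
  have hterm (e : V) :
      ⟪R4 h e X Y, e⟫ = ⟪X, Y⟫ * ⟪h e, e⟫ - ⟪h X, e⟫ * ⟪e, Y⟫
        + ⟪h X, Y⟫ * ⟪e, e⟫ - ⟪h e, Y⟫ * ⟪X, e⟫ := by
    simp only [R4, inner_add_left, inner_sub_left, real_inner_smul_left]
    ring
  simp only [ricciForm, hterm, Finset.sum_add_distrib, Finset.sum_sub_distrib,
    ← Finset.mul_sum, sum_inner_self_eq_finrank, sum_inner_map_self_eq_trace,
    sum_inner_map_mul_inner, b.sum_inner_mul_inner]
  ring

theorem ricciForm_R5 (φ h : V →ₗ[ℝ] V) (X Y : V) :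
    ricciForm b (R5 φ h) X Y =
      LinearMap.trace ℝ V h * ⟪h X, Y⟫ - ⟪h (h X), Y⟫
        + ⟪φ (h (φ (h X))), Y⟫ - LinearMap.trace ℝ V (φ * h) * ⟪φ (h X), Y⟫ := by
  have hterm (e : V) :
      ⟪R5 φ h e X Y, e⟫ = ⟪h X, Y⟫ * ⟪h e, e⟫ - ⟪h e, Y⟫ * ⟪h X, e⟫
        + ⟪(φ * h) e, Y⟫ * ⟪φ (h X), e⟫ - ⟪φ (h X), Y⟫ * ⟪(φ * h) e, e⟫ := by
    simp only [R5, inner_add_left, inner_sub_left, real_inner_smul_left, Module.End.mul_apply]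
  simp only [ricciForm, hterm, Finset.sum_add_distrib, Finset.sum_sub_distrib,
    ← Finset.mul_sum, sum_inner_map_self_eq_trace, sum_inner_map_mul_inner]
  simp only [Module.End.mul_apply]
  ring

theorem ricciForm_R6 (ξ : V) (h : V →ₗ[ℝ] V) (X Y : V) :
    ricciForm b (R6 ξ h) X Y =
      ⟪h X, ξ⟫ * ⟪Y, ξ⟫ - LinearMap.trace ℝ V h * (⟪X, ξ⟫ * ⟪Y, ξ⟫)
        + ⟪X, ξ⟫ * ⟪h ξ, Y⟫ - ⟪ξ, ξ⟫ * ⟪h X, Y⟫ := by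
  have hterm (e : V) :
      ⟪R6 ξ h e X Y, e⟫ = ⟪Y, ξ⟫ * (⟪h X, e⟫ * ⟪e, ξ⟫) - (⟪X, ξ⟫ * ⟪Y, ξ⟫) * ⟪h e, e⟫
        + ⟪X, ξ⟫ * (⟪h e, Y⟫ * ⟪ξ, e⟫) - ⟪h X, Y⟫ * (⟪ξ, e⟫ * ⟪e, ξ⟫) := by
    simp only [R6, inner_add_left, inner_sub_left, real_inner_smul_left, real_inner_comm e ξ]
    ring
  simp only [ricciForm, hterm, Finset.sum_add_distrib, Finset.sum_sub_distrib,
    ← Finset.mul_sum, sum_inner_map_self_eq_trace, sum_inner_map_mul_inner,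
    b.sum_inner_mul_inner]
  ring

theorem ricciForm_Rc (φ h : V →ₗ[ℝ] V) (ξ : V) (f₁ f₂ f₃ f₄ f₅ f₆ : ℝ) (X Y : V) :
    ricciForm b (Rc φ h ξ f₁ f₂ f₃ f₄ f₅ f₆) X Y =
      f₁ * ricciForm b R1 X Y + f₂ * ricciForm b (R2 φ) X Y + f₃ * ricciForm b (R3 ξ) X Y
        + f₄ * ricciForm b (R4 h) X Y + f₅ * ricciForm b (R5 φ h) X Y
        + f₆ * ricciForm b (R6 ξ h) X Y := by
  simp only [ricciForm, Rc, inner_add_left, real_inner_smul_left, Finset.sum_add_distrib,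
    Finset.mul_sum]

end RicciForm

/-- `(φ, ξ, η)` is an almost contact metric structure on `V`, where the `1`-form `η` is not
part of the data but is encoded as `η(X) = ⟪X, ξ⟫`. -/
structure IsAlmostContactMetric (φ : V →ₗ[ℝ] V) (ξ : V) : Prop where
  norm_reeb : ‖ξ‖ = 1
  map_map : ∀ X, φ (φ X) = -X + ⟪X, ξ⟫ • ξ
  inner_map_map : ∀ X Y, ⟪φ X, φ Y⟫ = ⟪X, Y⟫ - ⟪X, ξ⟫ * ⟪Y, ξ⟫

namespace IsAlmostContactMetric

variable {φ h : V →ₗ[ℝ] V} {ξ : V} (hφ : IsAlmostContactMetric φ ξ)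
include hφ

theorem inner_reeb_reeb : ⟪ξ, ξ⟫ = 1 :=
  inner_self_eq_one_of_norm_eq_one hφ.norm_reeb

theorem map_reeb : φ ξ = 0 := by
  rw [← inner_self_eq_zero (𝕜 := ℝ), hφ.inner_map_map, hφ.inner_reeb_reeb]
  norm_num

theorem inner_map_reeb (X : V) : ⟪φ X, ξ⟫ = 0 := by
  have hsmul : ⟪φ X, ξ⟫ • ξ = 0 := by
    simpa [hφ.map_map X, hφ.map_reeb] using hφ.map_map (φ X)
  have hξ : ξ ≠ 0 := norm_ne_zero_iff.mp (by simp [hφ.norm_reeb])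
  exact (smul_eq_zero.mp hsmul).resolve_right hξ

theorem inner_map_left (X Y : V) : ⟪φ X, Y⟫ = -⟪X, φ Y⟫ := by
  have hφφ := hφ.inner_map_map (φ X) Y
  rw [hφ.map_map, inner_add_left, inner_neg_left, real_inner_smul_left, hφ.inner_map_reeb,
    real_inner_comm (φ Y) ξ, hφ.inner_map_reeb] at hφφ
  linarith

theorem trace_eq_zero [FiniteDimensional ℝ V] : LinearMap.trace ℝ V φ = 0 := by
  have hself (X : V) : ⟪φ X, X⟫ = 0 := by
    have hskew := hφ.inner_map_left X X
    rw [real_inner_comm] at hskew ⊢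
    linarith
  simp only [← sum_inner_map_self_eq_trace (stdOrthonormalBasis ℝ V), hself,
    Finset.sum_const_zero]

theorem apply_eq_neg_apply_map_map (hhξ : h ξ = 0) (X : V) : h X = -h (φ (φ X)) := by
  simp [hφ.map_map, hhξ]

section Anticommuting

variable (hanti : ∀ X, h (φ X) = -φ (h X)) (hhξ : h ξ = 0)
include hanti hhξ

theorem inner_apply_reeb_of_anticommute (X : V) : ⟪h X, ξ⟫ = 0 := by
  rw [hφ.apply_eq_neg_apply_map_map hhξ, hanti, neg_neg, hφ.inner_map_reeb]

theorem map_apply_map_apply_of_anticommute (X : V) : φ (h (φ (h X))) = h (h X) := by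
  simp [hanti, hφ.map_map, hφ.inner_apply_reeb_of_anticommute hanti hhξ]

theorem trace_eq_zero_of_anticommute : LinearMap.trace ℝ V h = 0 := by
  have hh : h = -((h * φ) * φ) := by
    ext X
    exact hφ.apply_eq_neg_apply_map_map hhξ X
  have hφh : (h * φ) * φ = -(φ * (h * φ)) := by
    ext X
    exact hanti (φ X)
  rw [hh, map_neg, trace_mul_eq_zero_of_anticommute hφh, neg_zero]

end Anticommuting

end IsAlmostContactMetric

theorem stmt15_general [FiniteDimensional ℝ V] {ι : Type*} [Fintype ι]
    (b : OrthonormalBasis ι ℝ V) (φ h : V →ₗ[ℝ] V) (ξ : V) (f₁ f₂ f₃ f₄ f₅ f₆ : ℝ)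
    (hφ : IsAlmostContactMetric φ ξ) (hhξ : h ξ = 0) (hanti : ∀ X, h (φ X) = -φ (h X))
    (n : ℕ) (hdim : Module.finrank ℝ V = 2 * n + 1) (Q : V → V)
    (hQ : ∀ X Y, ⟪Q X, Y⟫ = ∑ a, Rq φ h ξ f₁ f₂ f₃ f₄ f₅ f₆ (b a) X Y (b a)) (X : V) :
    Q X = ((2 * (n : ℝ)) * f₁ + 3 * f₂ - f₃) • X
      - (3 * f₂ + (2 * (n : ℝ) - 1) * f₃) • (⟪X, ξ⟫ • ξ)
      + ((2 * (n : ℝ) - 1) * f₄ - f₆) • h X := by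
  refine ext_inner_right ℝ fun Y => ?_
  have hRic : ⟪Q X, Y⟫ = ricciForm b (Rc φ h ξ f₁ f₂ f₃ f₄ f₅ f₆) X Y := hQ X Y
  have hd : (Module.finrank ℝ V : ℝ) = 2 * n + 1 := by exact_mod_cast hdim
  have htrφh : LinearMap.trace ℝ V (φ * h) = 0 :=
    trace_mul_eq_zero_of_anticommute (by ext Z; simp [hanti])
  rw [hRic, ricciForm_Rc, ricciForm_R1, ricciForm_R2, ricciForm_R3, ricciForm_R4, ricciForm_R5,
    ricciForm_R6, hd, hφ.trace_eq_zero, hφ.trace_eq_zero_of_anticommute hanti hhξ, htrφh,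
    hφ.inner_map_map, hφ.map_apply_map_apply_of_anticommute hanti hhξ, hφ.inner_reeb_reeb,
    hφ.inner_apply_reeb_of_anticommute hanti hhξ, hhξ, inner_zero_left]
  simp only [inner_add_left, inner_sub_left, real_inner_smul_left, real_inner_comm Y ξ]
  ring

theorem stmt15 {V : Type*} [NormedAddCommGroup V] [InnerProductSpace ℝ V]
    [FiniteDimensional ℝ V]
    (φ h : V →ₗ[ℝ] V) (ξ : V) (f₁ f₂ f₃ f₄ f₅ f₆ : ℝ)
    (hξ : ‖ξ‖ = 1)
    (hφ2 : ∀ X : V, φ (φ X) = -X + ⟪X, ξ⟫ • ξ)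
    (hmet : ∀ X Y : V, ⟪φ X, φ Y⟫ = ⟪X, Y⟫ - ⟪X, ξ⟫ * ⟪Y, ξ⟫)
    (hsym : ∀ X Y : V, ⟪h X, Y⟫ = ⟪X, h Y⟫)
    (hhξ : h ξ = 0)
    (n : ℕ) (hn : 1 ≤ n) (hdim : Module.finrank ℝ V = 2 * n + 1)
    (hanti : ∀ X : V, h (φ X) = -φ (h X))
    (htr : LinearMap.trace ℝ V h = 0)
    (Q : V →ₗ[ℝ] V)
    (hQ : ∀ (b : OrthonormalBasis (Fin (2 * n + 1)) ℝ V) (X Y : V),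
      ⟪Q X, Y⟫ = ∑ a : Fin (2 * n + 1), Rq φ h ξ f₁ f₂ f₃ f₄ f₅ f₆ (b a) X Y (b a)) :
    ∀ X : V,
      Q X = ((2 * (n : ℝ)) * f₁ + 3 * f₂ - f₃) • X
        - (3 * f₂ + (2 * (n : ℝ) - 1) * f₃) • (⟪X, ξ⟫ • ξ)
        + ((2 * (n : ℝ) - 1) * f₄ - f₆) • h X :=
  stmt15_general ((stdOrthonormalBasis ℝ V).reindex (finCongr hdim)) φ h ξ f₁ f₂ f₃ f₄ f₅ f₆
    ⟨hξ, hφ2, hmet⟩ hhξ hanti n hdim Q (hQ _)
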